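/- arXiv:1602.02202 — 2 statements merged into one kernel-verified Lean document; each statement's English description precedes it below -/
import Mathlib

section
/- Let x ∈ R^d with x ≠ 0, u ∈ R^d, C > 0, let A ∈ R^{d×d} be a symmetric positive semidefinite matrix, and let B ∈ R^{d×d} satisfy the Moore–Penrose conditions A B A = A, B A B = B, (A B)^⊤ = A B, and (B A)^⊤ = B A. If x lies in the range (column space) of A, then x^⊤ B x > 0 and the point w* = u − (τ_C(u^⊤ x) / (x^⊤ B x)) · B x satisfies |w*^⊤ x| ≤ C and minimizes ‖w − u‖_A over the set {w ∈ R^d : |w^⊤ x| ≤ C}. -/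
open Matrix

/-- `τ_C(y) = sgn(y) · max(|y| - C, 0)`, where `sgn(a) = 1` if `a ≥ 0` and `-1` otherwise. -/
noncomputable def tauC (C y : ℝ) : ℝ := (if 0 ≤ y then (1 : ℝ) else -1) * max (|y| - C) 0

/-!
Put `p = B x`, so that `A p = x` and hence `wᵀx = wᵀAp` is the `A`-inner product of `w` with `p`.
By Cauchy–Schwarz, `‖w - u‖_A² ≥ (wᵀx - uᵀx)² / ‖p‖_A²`. Every `w` with `|wᵀx| ≤ C` satisfies
`|wᵀx - uᵀx| ≥ |τ_C(uᵀx)|`, since `|τ_C(y)|` is the distance from `y` to `[-C, C]`. Moving `u` along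
`p` just far enough to change `uᵀx` by `τ_C(uᵀx)` gives equality in both estimates.
-/

open LinearMap (BilinForm)
open LinearMap.BilinForm

section SoftThreshold

variable {C : ℝ}

theorem abs_tauC (C y : ℝ) : |tauC C y| = max (|y| - C) 0 := by
  have h : |max (|y| - C) 0| = max (|y| - C) 0 := abs_of_nonneg (le_max_right _ _)
  unfold tauC
  split_ifs <;> simp [h]

theorem abs_tauC_le_abs_sub {a : ℝ} (ha : |a| ≤ C) (y : ℝ) : |tauC C y| ≤ |a - y| := by
  rw [abs_tauC, abs_sub_comm]
  exact max_le ((sub_le_sub_left ha _).trans (abs_sub_abs_le_abs_sub y a)) (abs_nonneg _)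

theorem abs_sub_tauC_le (hC : 0 ≤ C) (y : ℝ) : |y - tauC C y| ≤ C := by
  unfold tauC
  split_ifs with hy
  · rw [abs_of_nonneg hy, abs_le]
    constructor <;> rcases max_cases (y - C) 0 with h | h <;> linarith
  · rw [abs_of_neg (not_le.1 hy), abs_le]
    constructor <;> rcases max_cases (-y - C) 0 with h | h <;> linarith

end SoftThreshold

section PosSemidefForm

variable {K E : Type*} [Field K] [LinearOrder K] [IsStrictOrderedRing K]
  [AddCommGroup E] [Module K E] {b : BilinForm K E}

theorem apply_self_pos_of_apply_ne_zero (hb : b.IsPosSemidef) {v p : E} (hvp : b v p ≠ 0) :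
    0 < b p p := by
  refine (hb.nonneg p).lt_of_ne' fun hp => hvp ?_
  have h := b.apply_sq_le_of_symm hb.nonneg (isSymm_iff.1 hb.isSymm) v p
  rw [hp, mul_zero] at h
  exact sq_nonpos_iff _ |>.1 h

theorem sq_apply_div_apply_self_le (hb : b.IsPosSemidef) (v p : E) :
    b v p ^ 2 / b p p ≤ b v v :=
  div_le_of_le_mul₀ (hb.nonneg p) (hb.nonneg v) <|
    b.apply_sq_le_of_symm hb.nonneg (isSymm_iff.1 hb.isSymm) v p

end PosSemidefForm

section SlabProjection

variable {E : Type*} [AddCommGroup E] [Module ℝ E] {b : BilinForm ℝ E} {p : E} {C : ℝ}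

/-- A nearest point to `u`, for the seminorm `√(b v v)`, in the slab `{w | |b w p| ≤ C}`, where `b`
is a positive semidefinite form. It is meaningful only if `b p p ≠ 0`; otherwise the quotient, and
with it the displacement of `u`, is `0`. -/
noncomputable def slabProjection (b : BilinForm ℝ E) (p : E) (C : ℝ) (u : E) : E :=
  u - (tauC C (b u p) / b p p) • p

theorem abs_slabProjection_apply_le (hp : b p p ≠ 0) (hC : 0 ≤ C) (u : E) :
    |b (slabProjection b p C u) p| ≤ C := by
  have h : b (slabProjection b p C u) p = b u p - tauC C (b u p) := by
    rw [slabProjection, sub_left, smul_left, div_mul_cancel₀ _ hp]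
  exact h ▸ abs_sub_tauC_le hC _

theorem slabProjection_sub_apply_self (b : BilinForm ℝ E) (p : E) (C : ℝ) (u : E) :
    b (slabProjection b p C u - u) (slabProjection b p C u - u) =
      tauC C (b u p) ^ 2 / b p p := by
  rw [slabProjection, sub_sub_cancel_left, neg_left, neg_right, neg_neg, smul_left, smul_right]
  rcases eq_or_ne (b p p) 0 with hp | hp
  · simp [hp]
  · field_simp

theorem slabProjection_sub_apply_self_le (hb : b.IsPosSemidef) (u : E) {w : E}
    (hw : |b w p| ≤ C) :
    b (slabProjection b p C u - u) (slabProjection b p C u - u) ≤ b (w - u) (w - u) :=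
  calc b (slabProjection b p C u - u) (slabProjection b p C u - u)
      = tauC C (b u p) ^ 2 / b p p := slabProjection_sub_apply_self b p C u
    _ ≤ b (w - u) p ^ 2 / b p p := by
        refine div_le_div_of_nonneg_right (sq_le_sq.2 ?_) (hb.nonneg p)
        rw [sub_left]
        exact abs_tauC_le_abs_sub hw _
    _ ≤ b (w - u) (w - u) := sq_apply_div_apply_self_le hb _ _

end SlabProjection

section MatrixForm

variable {n : Type*} [Fintype n]

theorem isPosSemidef_toBilin' [DecidableEq n] {R : Type*} [CommRing R] [PartialOrder R]
    [StarRing R] [TrivialStar R] {A : Matrix n n R} (hA : A.PosSemidef) :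
    A.toBilin'.IsPosSemidef where
  isSymm := isSymm_toBilin'_iff_isSymm.2 <|
    (conjTranspose_eq_transpose_of_trivial A).symm.trans hA.isHermitian
  nonneg v := by
    simpa only [toBilin'_apply', star_trivial] using hA.dotProduct_mulVec_nonneg v

theorem mulVec_mulVec_of_mul_mul_eq {m R : Type*} [Fintype m] [NonUnitalSemiring R]
    {A : Matrix m n R} {B : Matrix n m R} (hAB : A * B * A = A) {x : m → R}
    (hx : x ∈ Set.range A.mulVec) : A *ᵥ (B *ᵥ x) = x := by
  obtain ⟨z, rfl⟩ := hx
  rw [mulVec_mulVec, mulVec_mulVec, hAB]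

theorem projection_pseudoinverse_range_general {A B : Matrix n n ℝ} (hA : A.PosSemidef)
    (hAB : A * B * A = A) {x : n → ℝ} (hx : x ≠ 0) (hxrange : x ∈ Set.range A.mulVec)
    {C : ℝ} (hC : 0 ≤ C) (u : n → ℝ) {wstar : n → ℝ}
    (hws : wstar = u - (tauC C (u ⬝ᵥ x) / (x ⬝ᵥ B *ᵥ x)) • B *ᵥ x) :
    0 < x ⬝ᵥ B *ᵥ x ∧
    |wstar ⬝ᵥ x| ≤ C ∧
    ∀ w : n → ℝ, |w ⬝ᵥ x| ≤ C →
      √((wstar - u) ⬝ᵥ A *ᵥ (wstar - u)) ≤ √((w - u) ⬝ᵥ A *ᵥ (w - u)) := by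
  classical
  have hb := isPosSemidef_toBilin' hA
  have apply_p (v : n → ℝ) : A.toBilin' v (B *ᵥ x) = v ⬝ᵥ x := by
    rw [toBilin'_apply', mulVec_mulVec_of_mul_mul_eq hAB hxrange]
  have apply_p_self : A.toBilin' (B *ᵥ x) (B *ᵥ x) = x ⬝ᵥ B *ᵥ x := by
    rw [apply_p, dotProduct_comm]
  have hpos : 0 < A.toBilin' (B *ᵥ x) (B *ᵥ x) :=
    apply_self_pos_of_apply_ne_zero (v := x) hb <| by rwa [apply_p, Ne, dotProduct_self_eq_zero]
  have wstar_eq : wstar = slabProjection A.toBilin' (B *ᵥ x) C u := by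
    rw [hws, slabProjection, apply_p, apply_p_self]
  refine ⟨apply_p_self ▸ hpos, ?_, fun w hw => Real.sqrt_le_sqrt ?_⟩
  · rw [wstar_eq, ← apply_p]
    exact abs_slabProjection_apply_le hpos.ne' hC u
  · rw [← apply_p] at hw
    simpa only [wstar_eq, toBilin'_apply'] using slabProjection_sub_apply_self_le hb u hw

end MatrixForm

/-- **Projection with pseudoinverse, range case.** Let `A` be symmetric PSD and `B` its
Moore–Penrose pseudoinverse. If `x ≠ 0` lies in the column space of `A`, then `xᵀBx > 0`
and `w* = u - (τ_C(uᵀx) / (xᵀBx)) • Bx` satisfies `|w*ᵀx| ≤ C` and minimizes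
`‖w - u‖_A = √((w-u)ᵀA(w-u))` over `{w : |wᵀx| ≤ C}`. -/
theorem projection_pseudoinverse_range
    (d : ℕ) (x u : Fin d → ℝ) (hx : x ≠ 0) (C : ℝ) (hC : 0 < C)
    (A B : Matrix (Fin d) (Fin d) ℝ) (hA : A.PosSemidef)
    (hB1 : A * B * A = A) (hB2 : B * A * B = B)
    (hB3 : (A * B)ᵀ = A * B) (hB4 : (B * A)ᵀ = B * A)
    (hxrange : x ∈ Set.range A.mulVec)
    (wstar : Fin d → ℝ)
    (hws : wstar = u - (tauC C (u ⬝ᵥ x) / (x ⬝ᵥ B.mulVec x)) • B.mulVec x) :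
    0 < x ⬝ᵥ B.mulVec x ∧
    |wstar ⬝ᵥ x| ≤ C ∧
    (∀ w : Fin d → ℝ, |w ⬝ᵥ x| ≤ C →
      Real.sqrt ((wstar - u) ⬝ᵥ A.mulVec (wstar - u)) ≤
        Real.sqrt ((w - u) ⬝ᵥ A.mulVec (w - u))) :=
  projection_pseudoinverse_range_general hA hB1 hx hxrange hC.le u hws
end

section
/- Let α > 0 and g_1, ..., g_T ∈ R^d, and define A_0 = α I_d and A_t = A_{t−1} + g_t g_t^⊤ for t = 1,...,T (so each A_t is positive definite). Then Σ_{t=1}^T g_t^⊤ A_t^{−1} g_t ≤ ln( det(A_T) / det(A_0) ) = Σ_{i=1}^d ln(1 + λ_i(Σ_{t=1}^T g_t g_t^⊤)/α) ≤ d · ln(1 + Σ_{t=1}^T ‖g_t‖₂² / (dα)). -/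
open Matrix Finset

/-!
Removing the last update from `C = B + v v*`, the matrix determinant lemma gives
`det B = det C * (1 - v* C⁻¹ v)`, so `x ≤ -log (1 - x)` bounds `v* C⁻¹ v` by the increment
`log det C - log det B`, and these increments telescope. Diagonalizing `M = ∑ g_t g_t*` turns the
determinant ratio into `∏ (1 + λ_i / α)`, and since `∑ λ_i = tr M = ∑ ‖g_t‖²`, Jensen's inequality
for the logarithm gives the last bound.
-/

theorem eq_add_sum_Icc_of_eq_pred_add {G : Type*} [AddCommMonoid G] {f x : ℕ → G} {T : ℕ}
    (hf : ∀ t ∈ Icc 1 T, f t = f (t - 1) + x t) : f T = f 0 + ∑ t ∈ Icc 1 T, x t := by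
  induction T with
  | zero => simp
  | succ T ih =>
    rw [sum_Icc_succ_top (by lia), ← add_assoc,
      ← ih fun t ht ↦ hf t (Icc_subset_Icc_right T.le_succ ht)]
    exact hf (T + 1) (right_mem_Icc.2 (by lia))

theorem sum_Icc_one_sub_pred {G : Type*} [AddCommGroup G] (f : ℕ → G) (T : ℕ) :
    ∑ t ∈ Icc 1 T, (f t - f (t - 1)) = f T - f 0 :=
  eq_sub_of_add_eq' (eq_add_sum_Icc_of_eq_pred_add fun _ _ ↦ (add_sub_cancel _ _).symm).symm

theorem sum_log_le_card_mul_log_sum_div_card {ι : Type*} (s : Finset ι) {p : ι → ℝ}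
    (hp : ∀ i ∈ s, 0 < p i) :
    ∑ i ∈ s, Real.log (p i) ≤ #s * Real.log ((∑ i ∈ s, p i) / #s) := by
  obtain rfl | hs := s.eq_empty_or_nonempty
  · simp
  have hcard : (0 : ℝ) < #s := by exact_mod_cast hs.card_pos
  have jensen := strictConcaveOn_log_Ioi.concaveOn.le_map_centerMass (t := s) (w := fun _ ↦ 1)
    (p := p) (fun _ _ ↦ zero_le_one) (by simpa using hs) hp
  simp only [centerMass, sum_const, nsmul_eq_mul, mul_one, smul_eq_mul, one_mul,
    Function.comp_apply] at jensen
  rwa [inv_mul_le_iff₀ hcard, inv_mul_eq_div] at jensen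

theorem sum_log_one_add_div_le {ι : Type*} (s : Finset ι) {x : ι → ℝ} {a : ℝ} (ha : 0 < a)
    (hx : ∀ i ∈ s, 0 ≤ x i) :
    ∑ i ∈ s, Real.log (1 + x i / a) ≤ #s * Real.log (1 + (∑ i ∈ s, x i) / (#s * a)) := by
  obtain rfl | hs := s.eq_empty_or_nonempty
  · simp
  have average : (∑ i ∈ s, (1 + x i / a)) / #s = 1 + (∑ i ∈ s, x i) / (#s * a) := by
    have hcard : (#s : ℝ) ≠ 0 := by exact_mod_cast hs.card_ne_zero
    rw [sum_add_distrib, sum_const, nsmul_one, ← sum_div]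
    field_simp
  rw [← average]
  exact sum_log_le_card_mul_log_sum_div_card s fun i hi ↦
    add_pos_of_pos_of_nonneg one_pos (div_nonneg (hx i hi) ha.le)

section Matrix

variable {n : Type*} [Fintype n] [DecidableEq n]

theorem det_add_vecMulVec {R : Type*} [CommRing R] {A : Matrix n n R} (hA : IsUnit A.det)
    (u v : n → R) : (A + vecMulVec u v).det = A.det * (1 + v ⬝ᵥ A⁻¹ *ᵥ u) := by
  rw [vecMulVec_eq Unit, det_add_replicateCol_mul_replicateRow hA, Matrix.mul_assoc,
    ← replicateCol_mulVec, det_unique (n := Unit), Matrix.add_apply, one_apply_eq,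
    replicateRow_mul_replicateCol_apply]

variable {𝕜 : Type*} [RCLike 𝕜]

theorem det_smul_one_add_eq_prod {M : Matrix n n 𝕜} (hM : M.IsHermitian) (c : 𝕜) :
    (c • 1 + M).det = ∏ i, (c + hM.eigenvalues i) := by
  have det_scalar_sub : (scalar n (-c) - M).det = ∏ i, (-c - hM.eigenvalues i) := by
    rw [← eval_charpoly, hM.charpoly_eq, Polynomial.eval_prod]
    simp only [Polynomial.eval_sub, Polynomial.eval_X, Polynomial.eval_C]
  have smul_one_add : c • 1 + M = -(scalar n (-c) - M) := by
    rw [map_neg, scalar_apply, ← smul_one_eq_diagonal]; abel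
  rw [smul_one_add, det_neg, det_scalar_sub, ← card_univ, ← prod_const, ← prod_mul_distrib]
  exact prod_congr rfl fun i _ ↦ by ring

theorem re_det_smul_one_add_div_eq_prod {M : Matrix n n 𝕜} (hM : M.IsHermitian) {a : ℝ}
    (ha : a ≠ 0) :
    RCLike.re (a • 1 + M).det / RCLike.re (a • (1 : Matrix n n 𝕜)).det =
      ∏ i, (1 + hM.eigenvalues i / a) := by
  have numerator : (a • 1 + M).det = ((∏ i, (a + hM.eigenvalues i) : ℝ) : 𝕜) := by
    rw [RCLike.real_smul_eq_coe_smul (K := 𝕜), det_smul_one_add_eq_prod hM]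
    push_cast
    rfl
  have denominator : (a • (1 : Matrix n n 𝕜)).det = ((∏ _i : n, a : ℝ) : 𝕜) := by
    rw [RCLike.real_smul_eq_coe_smul (K := 𝕜), det_smul, det_one]
    simp
  rw [numerator, denominator, RCLike.ofReal_re, RCLike.ofReal_re, ← prod_div_distrib]
  exact prod_congr rfl fun i _ ↦ by rw [add_div, div_self ha]

open scoped ComplexOrder

theorem log_re_det_smul_one_add_div_eq_sum {M : Matrix n n 𝕜} (hM : M.PosSemidef) {a : ℝ}
    (ha : 0 < a) :
    Real.log (RCLike.re (a • 1 + M).det / RCLike.re (a • (1 : Matrix n n 𝕜)).det) =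
      ∑ i, Real.log (1 + hM.1.eigenvalues i / a) := by
  rw [re_det_smul_one_add_div_eq_prod hM.1 ha.ne', Real.log_prod]
  intro i _
  have := div_nonneg (hM.eigenvalues_nonneg i) ha.le
  positivity

theorem re_dotProduct_inv_mulVec_le_log_det_sub {B : Matrix n n 𝕜} (hB : B.PosDef) (v : n → 𝕜) :
    RCLike.re (star v ⬝ᵥ (B + vecMulVec v (star v))⁻¹ *ᵥ v) ≤
      Real.log (RCLike.re (B + vecMulVec v (star v)).det) - Real.log (RCLike.re B.det) := by
  set C := B + vecMulVec v (star v) with hC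
  set q := star v ⬝ᵥ C⁻¹ *ᵥ v
  have hC_det : 0 < C.det := (hB.add_posSemidef (posSemidef_vecMulVec_self_star v)).det_pos
  obtain ⟨hC_re, hC_im⟩ := RCLike.pos_iff.1 hC_det
  have hB_re : 0 < RCLike.re B.det := (RCLike.pos_iff.1 hB.det_pos).1
  have det_eq : B.det = C.det * (1 - q) := by
    have := det_add_vecMulVec hC_det.ne'.isUnit (-v) (star v)
    rwa [neg_vecMulVec, hC, add_neg_cancel_right, ← hC, mulVec_neg, dotProduct_neg,
      ← sub_eq_add_neg] at this
  have re_det_eq : RCLike.re B.det = RCLike.re C.det * (1 - RCLike.re q) := by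
    rw [det_eq, RCLike.mul_re, hC_im, zero_mul, sub_zero, map_sub, RCLike.one_re]
  have one_sub_pos : 0 < 1 - RCLike.re q := pos_of_mul_pos_right (re_det_eq ▸ hB_re) hC_re.le
  rw [re_det_eq, Real.log_mul hC_re.ne' one_sub_pos.ne']
  linarith [Real.log_le_sub_one_of_pos one_sub_pos]

theorem sum_re_dotProduct_inv_mulVec_le_log_det_div {T : ℕ} {g : ℕ → n → 𝕜}
    {A : ℕ → Matrix n n 𝕜} (hA0 : (A 0).PosDef)
    (hA : ∀ t ∈ Icc 1 T, A t = A (t - 1) + vecMulVec (g t) (star (g t))) :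
    ∑ t ∈ Icc 1 T, RCLike.re (star (g t) ⬝ᵥ (A t)⁻¹ *ᵥ g t) ≤
      Real.log (RCLike.re (A T).det / RCLike.re (A 0).det) := by
  have posDef : ∀ t ≤ T, (A t).PosDef := by
    intro t ht
    rw [eq_add_sum_Icc_of_eq_pred_add fun s hs ↦ hA s (Icc_subset_Icc_right ht hs)]
    exact hA0.add_posSemidef (posSemidef_sum _ fun s _ ↦ posSemidef_vecMulVec_self_star (g s))
  have re_det_pos : ∀ t ≤ T, 0 < RCLike.re (A t).det := fun t ht ↦
    (RCLike.pos_iff.1 (posDef t ht).det_pos).1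
  calc ∑ t ∈ Icc 1 T, RCLike.re (star (g t) ⬝ᵥ (A t)⁻¹ *ᵥ g t)
    _ ≤ ∑ t ∈ Icc 1 T,
          (Real.log (RCLike.re (A t).det) - Real.log (RCLike.re (A (t - 1)).det)) := by
        refine sum_le_sum fun t ht ↦ ?_
        have hpred : t - 1 ≤ T := (Nat.sub_le t 1).trans (mem_Icc.1 ht).2
        rw [hA t ht]
        exact re_dotProduct_inv_mulVec_le_log_det_sub (posDef (t - 1) hpred) (g t)
    _ = Real.log (RCLike.re (A T).det / RCLike.re (A 0).det) := by
        rw [sum_Icc_one_sub_pred fun t ↦ Real.log (RCLike.re (A t).det),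
          Real.log_div (re_det_pos T le_rfl).ne' (re_det_pos 0 T.zero_le).ne']

theorem sum_eigenvalues_eq_sum_re_dotProduct {ι : Type*} {s : Finset ι} {g : ι → n → 𝕜}
    (hM : (∑ t ∈ s, vecMulVec (g t) (star (g t))).IsHermitian) :
    ∑ i, hM.eigenvalues i = ∑ t ∈ s, RCLike.re (star (g t) ⬝ᵥ g t) := by
  have re_trace := congrArg RCLike.re hM.trace_eq_sum_eigenvalues
  rw [trace_sum] at re_trace
  simpa [trace_vecMulVec, dotProduct_comm] using re_trace.symm

theorem log_det_bound_general (T : ℕ) (α : ℝ) (hα : 0 < α) (g : ℕ → n → 𝕜)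
    (A : ℕ → Matrix n n 𝕜) (hA0 : A 0 = α • (1 : Matrix n n 𝕜))
    (hAt : ∀ t ∈ Icc 1 T, A t = A (t - 1) + vecMulVec (g t) (star (g t)))
    (M : Matrix n n 𝕜) (hMdef : M = ∑ t ∈ Icc 1 T, vecMulVec (g t) (star (g t)))
    (hM : M.IsHermitian) :
    ∑ t ∈ Icc 1 T, RCLike.re (star (g t) ⬝ᵥ (A t)⁻¹ *ᵥ g t) ≤
        Real.log (RCLike.re (A T).det / RCLike.re (A 0).det) ∧
    Real.log (RCLike.re (A T).det / RCLike.re (A 0).det) =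
        ∑ i, Real.log (1 + hM.eigenvalues i / α) ∧
    ∑ i, Real.log (1 + hM.eigenvalues i / α) ≤
      Fintype.card n *
        Real.log (1 + (∑ t ∈ Icc 1 T, RCLike.re (star (g t) ⬝ᵥ g t)) / (Fintype.card n * α)) := by
  subst hMdef
  have hM_psd : (∑ t ∈ Icc 1 T, vecMulVec (g t) (star (g t))).PosSemidef :=
    posSemidef_sum _ fun t _ ↦ posSemidef_vecMulVec_self_star (g t)
  refine ⟨?_, ?_, ?_⟩
  · exact sum_re_dotProduct_inv_mulVec_le_log_det_div (hA0 ▸ PosDef.one.smul hα) hAt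
  · rw [eq_add_sum_Icc_of_eq_pred_add hAt, hA0]
    exact log_re_det_smul_one_add_div_eq_sum hM_psd hα
  · rw [← sum_eigenvalues_eq_sum_re_dotProduct hM]
    exact sum_log_one_add_div_le univ hα fun i _ ↦ hM_psd.eigenvalues_nonneg i

end Matrix

/-- **Log-determinant gradient bound.** For `α > 0`, `g_1,…,g_T ∈ ℝ^d`, `A_0 = αI` and
`A_t = A_{t−1} + g_t g_tᵀ`,
`Σ_t g_tᵀ A_t⁻¹ g_t ≤ ln(det A_T / det A_0) = Σ_i ln(1 + λ_i(Σ_t g_t g_tᵀ)/α)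
  ≤ d ln(1 + Σ_t ‖g_t‖₂²/(dα))`. -/
theorem log_det_bound
    (d T : ℕ) (α : ℝ) (hα : 0 < α) (g : ℕ → Fin d → ℝ)
    (A : ℕ → Matrix (Fin d) (Fin d) ℝ)
    (hA0 : A 0 = α • (1 : Matrix (Fin d) (Fin d) ℝ))
    (hAt : ∀ t ∈ Finset.Icc 1 T, A t = A (t - 1) + Matrix.vecMulVec (g t) (g t))
    (M : Matrix (Fin d) (Fin d) ℝ)
    (hMdef : M = ∑ t ∈ Finset.Icc 1 T, Matrix.vecMulVec (g t) (g t))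
    (hM : M.IsHermitian) :
    ∑ t ∈ Finset.Icc 1 T, g t ⬝ᵥ (A t)⁻¹.mulVec (g t) ≤
        Real.log ((A T).det / (A 0).det) ∧
    Real.log ((A T).det / (A 0).det) = ∑ i : Fin d, Real.log (1 + hM.eigenvalues i / α) ∧
    ∑ i : Fin d, Real.log (1 + hM.eigenvalues i / α) ≤
      (d : ℝ) * Real.log (1 + (∑ t ∈ Finset.Icc 1 T, g t ⬝ᵥ g t) / (d * α)) := by
  simpa using
    log_det_bound_general T α hα g A hA0 (by simpa using hAt) M (by simpa using hMdef) hM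
end
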